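/- Let Σ' ⊆ Σ be alphabets with Π = Σ \ Σ' finite, let R be a finite set of pairs of words over Σ, and let D ⊆ R be a family of Σ-defining relations for Π whose derived generator graph is acyclic. Then there exists a set Q of pairs of words over Σ' with |Q| ≤ |R \ D| such that the monoid presented by ⟨Σ ∣ R⟩ is isomorphic to the monoid presented by ⟨Σ' ∣ Q⟩. -/

import Mathlib

/-!
Acyclicity on the finite set `Sᶜ` makes the derived generator graph well founded, so the
defining relations can be unfolded recursively. This yields a homomorphism
`φ : FreeMonoid α →* FreeMonoid S` which is the identity on the letters of `S` and satisfies
`φ x = φ (w x)` for the derived generators `x` (`exists_unfold`). Take for `Q` the image of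
`R \ D` under `φ × φ`.

The homomorphism `φ` identifies both sides of each relation in `D` and sends the remaining
relations into `Q`, so it descends to the quotients. Conversely, well-founded induction shows that
`φ u`, read back as a word over `α`, is congruent to `u` modulo `R`
(`comp_unfold_eq`); hence the inclusion of words over `S` also descends to the quotients, and
the two induced maps are mutually inverse.
-/

theorem hom_eq_of_eq_on_letters {α M : Type*} [Monoid M] (f g : FreeMonoid α →* M)
    (u : FreeMonoid α)
    (h : ∀ a ∈ FreeMonoid.toList u, f (FreeMonoid.of a) = g (FreeMonoid.of a)) : f u = g u := by
  induction u using FreeMonoid.inductionOn' with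
  | one => simp
  | of_mul a u ih =>
    rw [map_mul, map_mul, h a (by simp), ih fun b hb => h b (by simp [hb])]

theorem wellFounded_derived {α : Type*} (S : Set α) (hfin : (Sᶜ : Set α).Finite)
    (w : (Sᶜ : Set α) → FreeMonoid α)
    (hacyclic : ∀ x : (Sᶜ : Set α),
      ¬ Relation.TransGen
          (fun a b : (Sᶜ : Set α) => (b : α) ∈ FreeMonoid.toList (w a)) x x) :
    WellFounded fun b a : (Sᶜ : Set α) => (b : α) ∈ FreeMonoid.toList (w a) := by
  have : Finite (Sᶜ : Set α) := hfin
  let T : (Sᶜ : Set α) → (Sᶜ : Set α) → Prop := fun b a => Relation.TransGen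
    (fun a b : (Sᶜ : Set α) => (b : α) ∈ FreeMonoid.toList (w a)) a b
  have : Std.Irrefl T := ⟨hacyclic⟩
  have : IsTrans (Sᶜ : Set α) T := ⟨fun _ _ _ hab hbc => hbc.trans hab⟩
  exact Subrelation.wf (r := T) (fun h => Relation.TransGen.single h)
    (Finite.wellFounded_of_trans_of_irrefl T)

/-- Recursive unfolding of the derived generators: a homomorphism onto words over `S` that fixes
the letters of `S` and identifies each derived generator with its defining word. -/
theorem exists_unfold {α : Type*} (S : Set α) (w : (Sᶜ : Set α) → FreeMonoid α)
    (hwf : WellFounded fun b a : (Sᶜ : Set α) => (b : α) ∈ FreeMonoid.toList (w a)) :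
    ∃ φ : FreeMonoid α →* FreeMonoid S,
      (∀ s : S, φ (FreeMonoid.of (s : α)) = FreeMonoid.of s) ∧
      ∀ x : (Sᶜ : Set α), φ (FreeMonoid.of (x : α)) = φ (w x) := by
  classical
  let F : ∀ x : (Sᶜ : Set α),
      (∀ y : (Sᶜ : Set α), (y : α) ∈ FreeMonoid.toList (w x) → FreeMonoid S) → FreeMonoid S :=
    fun x r => ((FreeMonoid.toList (w x)).attach.map
      fun y : {a // a ∈ FreeMonoid.toList (w x)} =>
      if h : (y : α) ∈ S then FreeMonoid.of (⟨y, h⟩ : S) else r ⟨y, h⟩ y.2).prod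
  let f : (Sᶜ : Set α) → FreeMonoid S := hwf.fix F
  let g : α → FreeMonoid S := fun a =>
    if h : a ∈ S then FreeMonoid.of (⟨a, h⟩ : S) else f ⟨a, h⟩
  refine ⟨FreeMonoid.lift g, fun s => by simp [g], fun x => ?_⟩
  have hx : (x : α) ∉ S := x.2
  have hfx : f x = F x fun y _ => f y := hwf.fix_eq F x
  have hgx : g x = f x := by simp [g, hx]
  rw [FreeMonoid.lift_eval_of, hgx, hfx, FreeMonoid.lift_apply,
    ← List.attach_map_val (f := g) (l := FreeMonoid.toList (w x))]

/-- Unfolding derived generators does not change the value of a word under any homomorphism `m`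
that satisfies the defining relations. -/
theorem comp_unfold_eq {α M : Type*} [Monoid M] (S : Set α) (w : (Sᶜ : Set α) → FreeMonoid α)
    (hwf : WellFounded fun b a : (Sᶜ : Set α) => (b : α) ∈ FreeMonoid.toList (w a))
    (φ : FreeMonoid α →* FreeMonoid S)
    (hS : ∀ s : S, φ (FreeMonoid.of (s : α)) = FreeMonoid.of s)
    (hw : ∀ x : (Sᶜ : Set α), φ (FreeMonoid.of (x : α)) = φ (w x))
    (m : FreeMonoid α →* M) (hm : ∀ x : (Sᶜ : Set α), m (FreeMonoid.of (x : α)) = m (w x))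
    (u : FreeMonoid α) : m (FreeMonoid.map Subtype.val (φ u)) = m u := by
  have letterS : ∀ s : S,
      m (FreeMonoid.map Subtype.val (φ (FreeMonoid.of (s : α)))) = m (FreeMonoid.of (s : α)) := by
    intro s
    rw [hS, FreeMonoid.map_of]
  have letterD : ∀ x : (Sᶜ : Set α),
      m (FreeMonoid.map Subtype.val (φ (FreeMonoid.of (x : α)))) = m (FreeMonoid.of (x : α)) := by
    intro x
    induction x using hwf.induction with
    | _ x ih =>
      rw [hw, hm]
      refine hom_eq_of_eq_on_letters ((m.comp (FreeMonoid.map Subtype.val)).comp φ) m (w x) ?_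
      intro a ha
      by_cases h : a ∈ S
      · exact letterS ⟨a, h⟩
      · exact ih ⟨a, h⟩ ha
  refine hom_eq_of_eq_on_letters ((m.comp (FreeMonoid.map Subtype.val)).comp φ) m u ?_
  intro a _
  by_cases h : a ∈ S
  · exact letterS ⟨a, h⟩
  · exact letterD ⟨a, h⟩

/-- Let `S ⊆ α` with `Sᶜ` finite, let `R` be a finite set of pairs of
words over `α`, and let `D = {(x, w x) | x ∈ Sᶜ} ⊆ R` be a family of defining relations
with acyclic derived generator graph. Then there is a set `Q` of pairs of words over `S`
with `|Q| ≤ |R \ D|` such that `⟨α ∣ R⟩` and `⟨S ∣ Q⟩` present isomorphic monoids. -/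
theorem presentation_eliminate_derived_generators {α : Type} (S : Set α)
    (hfin : (Sᶜ : Set α).Finite)
    (R : Set (FreeMonoid α × FreeMonoid α)) (hR : R.Finite)
    (w : (Sᶜ : Set α) → FreeMonoid α)
    (hD : {p : FreeMonoid α × FreeMonoid α |
        ∃ x : (Sᶜ : Set α), p = (FreeMonoid.of (x : α), w x)} ⊆ R)
    (hacyclic : ∀ x : (Sᶜ : Set α),
      ¬ Relation.TransGen
          (fun a b : (Sᶜ : Set α) => (b : α) ∈ FreeMonoid.toList (w a)) x x) :
    ∃ Q : Set (FreeMonoid ↥S × FreeMonoid ↥S), Q.Finite ∧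
      Q.ncard ≤ (R \ {p : FreeMonoid α × FreeMonoid α |
          ∃ x : (Sᶜ : Set α), p = (FreeMonoid.of (x : α), w x)}).ncard ∧
      Nonempty
        ((conGen fun u v : FreeMonoid α => (u, v) ∈ R).Quotient ≃*
          (conGen fun u v : FreeMonoid ↥S => (u, v) ∈ Q).Quotient) := by
  have hwf := wellFounded_derived S hfin w hacyclic
  obtain ⟨φ, hS, hw⟩ := exists_unfold S w hwf
  set D : Set (FreeMonoid α × FreeMonoid α) :=
    {p | ∃ x : (Sᶜ : Set α), p = (FreeMonoid.of (x : α), w x)} with hDdef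
  have hRD : (R \ D).Finite := hR.sdiff
  refine ⟨Prod.map φ φ '' (R \ D), hRD.image _, Set.ncard_image_le hRD, ?_⟩
  set Q := Prod.map φ φ '' (R \ D) with hQ
  set cR : Con (FreeMonoid α) := conGen fun u v => (u, v) ∈ R with hcR
  set cQ : Con (FreeMonoid S) := conGen fun u v => (u, v) ∈ Q with hcQ
  let ι : FreeMonoid S →* FreeMonoid α := FreeMonoid.map Subtype.val
  have hφι : ∀ v, φ (ι v) = v := by
    intro v
    exact hom_eq_of_eq_on_letters (φ.comp ι) (MonoidHom.id _) v fun s _ => by simp [ι, hS]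
  have hmR : ∀ u v, (u, v) ∈ R → cR.mk' u = cR.mk' v := fun u v h =>
    (Con.eq cR).2 (ConGen.Rel.of _ _ h)
  have hιφ : ∀ u, cR.mk' (ι (φ u)) = cR.mk' u :=
    comp_unfold_eq S w hwf φ hS hw cR.mk' fun x => hmR _ _ (hD ⟨x, rfl⟩)
  have hfwd : cR ≤ Con.ker (cQ.mk'.comp φ) := by
    refine Con.conGen_le.2 fun u v h => ?_
    by_cases hd : (u, v) ∈ D
    · obtain ⟨x, hx⟩ := hd
      obtain ⟨rfl, rfl⟩ := Prod.mk.inj hx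
      exact congrArg cQ.mk' (hw x)
    · exact (Con.eq cQ).2 (ConGen.Rel.of _ _ ⟨(u, v), ⟨h, hd⟩, rfl⟩)
  have hbwd : cQ ≤ Con.ker (cR.mk'.comp ι) := by
    refine Con.conGen_le.2 fun u v h => ?_
    obtain ⟨⟨p, q⟩, ⟨hpq, -⟩, he⟩ := h
    obtain ⟨rfl, rfl⟩ := Prod.mk.inj he
    exact (hιφ p).trans ((hmR p q hpq).trans (hιφ q).symm)
  refine ⟨MonoidHom.toMulEquiv (Con.lift cR _ hfwd) (Con.lift cQ _ hbwd) ?_ ?_⟩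
  · ext x
    exact hιφ _
  · ext x
    exact congrArg cQ.mk' (hφι _)
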